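/- Let ν be the uniform probability measure on [0,1] (Lebesgue measure restricted to [0,1]). Then the sequence of pushforward measures ν ∘ (φ^n)^{−1}, i.e., the iterates of the uniform distribution under the paradoxical map, converges weakly to the Dirac delta measure concentrated at the origin as n → ∞. -/

import Mathlib

open MeasureTheory

/-- The paradoxical map: `φ(x) = x/(1-x)` for `x ∈ (0, 1/2)`, `φ(x) = 2(1-x)` for
`x ∈ [1/2, 1]`, and `φ(x) = 0` otherwise (in particular `φ(0) = 0`). -/
noncomputable def psi (x : ℝ) : ℝ :=
  if 0 < x ∧ x < 1 / 2 then x / (1 - x)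
  else if 1 / 2 ≤ x ∧ x ≤ 1 then 2 * (1 - x)
  else 0

/-!
The map `psi` preserves the infinite measure with density `1 / (x (2 - x))`. Let `gₙ` be the density
of the `n`-th iterate of an initial law and `kₙ = x (2 - x) gₙ` its density relative to that
invariant measure. The value `kₙ₊₁ x` is a weighted average of `kₙ` over the two preimages of `x`,
so the energy `∫ kₙ gₙ` decreases, by a weighted integral of the squared difference of `kₙ` between
the two preimages. Hence these differences tend to `0` in `L²`. As `x` runs over `(0, 1]`, its right
preimage stays in `[1/2, 1]`, where a Harnack inequality bounds `kₙ` below by a multiple of `gₙ 1`,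
while its left preimage runs over `(0, 1/2]`. Up to a small error, `gₙ₊₁ x` is therefore at least a
multiple of `(gₙ 1)² / x`, and since `1 / x` is not integrable at `0` while the total mass is fixed,
`gₙ 1 → 0`. By the Harnack inequality again, `gₙ → 0` uniformly away from `0`.
-/

open Set Filter Topology

namespace ParadoxicalMap

/-! ### The map and its inverse branches -/

lemma psi_of_le_half {x : ℝ} (hx₀ : 0 ≤ x) (hx : x ≤ 1 / 2) : psi x = x / (1 - x) := by
  unfold psi
  split_ifs with h₁ h₂
  · rfl
  · obtain rfl : x = 1 / 2 := hx.antisymm h₂.1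
    norm_num
  · obtain rfl : x = 0 := by grind
    norm_num

lemma psi_of_half_le {x : ℝ} (hx : 1 / 2 ≤ x) (hx₁ : x ≤ 1) : psi x = 2 * (1 - x) := by
  rw [psi, if_neg (fun h => hx.not_gt h.2), if_pos ⟨hx, hx₁⟩]

lemma measurable_psi : Measurable psi :=
  Measurable.ite measurableSet_Ioo (by fun_prop)
    (Measurable.ite measurableSet_Icc (by fun_prop) measurable_const)

lemma mapsTo_psi : MapsTo psi (Icc 0 1) (Icc 0 1) := by
  rintro x ⟨hx₀, hx₁⟩
  rcases le_total x (1 / 2) with hx | hx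
  · rw [psi_of_le_half hx₀ hx]
    exact ⟨div_nonneg hx₀ (by linarith), div_le_one_of_le₀ (by linarith) (by linarith)⟩
  · rw [psi_of_half_le hx hx₁]
    constructor <;> linarith

lemma continuousOn_psi : ContinuousOn psi (Icc 0 1) := by
  have left : ContinuousOn psi (Icc 0 (1 / 2)) := by
    have h : ContinuousOn (fun x : ℝ => x / (1 - x)) (Icc 0 (1 / 2)) :=
      continuousOn_id.div (by fun_prop) fun x hx => by linarith [hx.2]
    exact h.congr fun x hx => psi_of_le_half hx.1 hx.2
  have right : ContinuousOn psi (Icc (1 / 2) 1) := by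
    have h : ContinuousOn (fun x : ℝ => 2 * (1 - x)) (Icc (1 / 2) 1) := by fun_prop
    exact h.congr fun x hx => psi_of_half_le hx.1 hx.2
  have h := left.union_of_isClosed right isClosed_Icc isClosed_Icc
  rwa [Icc_union_Icc_eq_Icc (by norm_num) (by norm_num)] at h

/-- The inverse of `psi` on `[0, 1/2]`. -/
noncomputable def leftBranch (x : ℝ) : ℝ := x / (1 + x)

/-- The inverse of `psi` on `[1/2, 1]`. -/
noncomputable def rightBranch (x : ℝ) : ℝ := 1 - x / 2

section Branches

variable {x : ℝ}

lemma leftBranch_mem_Icc (hx : x ∈ Icc (0 : ℝ) 1) : leftBranch x ∈ Icc (0 : ℝ) (1 / 2) := by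
  obtain ⟨hx₀, hx₁⟩ := hx
  refine ⟨div_nonneg hx₀ (by linarith), ?_⟩
  rw [leftBranch, div_le_div_iff₀ (by linarith) two_pos]
  linarith

lemma leftBranch_mem_Ioc (hx : x ∈ Ioc (0 : ℝ) 1) : leftBranch x ∈ Ioc (0 : ℝ) 1 :=
  ⟨div_pos hx.1 (by linarith [hx.1]),
    (leftBranch_mem_Icc (Ioc_subset_Icc_self hx)).2.trans (by norm_num)⟩

lemma rightBranch_mem_Icc (hx : x ∈ Icc (0 : ℝ) 1) : rightBranch x ∈ Icc (1 / 2 : ℝ) 1 := by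
  obtain ⟨hx₀, hx₁⟩ := hx
  constructor <;> rw [rightBranch] <;> linarith

lemma rightBranch_mem_Ioc (hx : x ∈ Icc (0 : ℝ) 1) : rightBranch x ∈ Ioc (0 : ℝ) 1 :=
  ⟨one_half_pos.trans_le (rightBranch_mem_Icc hx).1, (rightBranch_mem_Icc hx).2⟩

lemma psi_leftBranch (hx : x ∈ Icc (0 : ℝ) 1) : psi (leftBranch x) = x := by
  have h₁ : 1 + x ≠ 0 := by linarith [hx.1]
  have h := leftBranch_mem_Icc hx
  rw [psi_of_le_half h.1 h.2, leftBranch]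
  field_simp
  ring

lemma psi_rightBranch (hx : x ∈ Icc (0 : ℝ) 1) : psi (rightBranch x) = x := by
  have h := rightBranch_mem_Icc hx
  rw [psi_of_half_le h.1 h.2, rightBranch]
  ring

end Branches

lemma mapsTo_leftBranch : MapsTo leftBranch (Icc 0 1) (Icc 0 1) := fun _ hx =>
  Icc_subset_Icc_right (by norm_num) (leftBranch_mem_Icc hx)

lemma mapsTo_rightBranch : MapsTo rightBranch (Icc 0 1) (Icc 0 1) := fun _ hx =>
  Icc_subset_Icc_left (by norm_num) (rightBranch_mem_Icc hx)

lemma hasDerivAt_leftBranch {x : ℝ} (hx : 1 + x ≠ 0) :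
    HasDerivAt leftBranch (1 / (1 + x) ^ 2) x :=
  ((hasDerivAt_id' x).fun_div ((hasDerivAt_id' x).const_add 1) hx).congr_deriv (by ring)

lemma continuousOn_leftBranch : ContinuousOn leftBranch (Icc 0 1) := fun x hx =>
  (hasDerivAt_leftBranch (by linarith [hx.1])).continuousAt.continuousWithinAt

lemma continuous_rightBranch : Continuous rightBranch := by
  unfold rightBranch
  fun_prop

lemma monotoneOn_leftBranch : MonotoneOn leftBranch (Ioc 0 1) := by
  rintro x ⟨hx₀, -⟩ y ⟨hy₀, -⟩ hxy
  rw [leftBranch, leftBranch, div_le_div_iff₀ (by linarith) (by linarith)]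
  linarith

lemma antitone_rightBranch : Antitone rightBranch := fun x y hxy => by
  unfold rightBranch
  linarith

lemma monotoneOn_mul_rightBranch : MonotoneOn (fun x => x * rightBranch x) (Ioc 0 1) := by
  rintro x ⟨-, hx₁⟩ y ⟨-, hy₁⟩ hxy
  simp only [rightBranch]
  nlinarith

/-! ### The transfer operator -/

/-- The transfer (Perron–Frobenius) operator of `psi` on densities on `[0, 1]`: if a law has density
`g`, its image under `psi` has density `transfer g`. -/
noncomputable def transfer (g : ℝ → ℝ) (x : ℝ) : ℝ :=
  g (leftBranch x) / (1 + x) ^ 2 + g (rightBranch x) / 2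

section Transfer

variable {g : ℝ → ℝ}

lemma continuousOn_leftBranch_term (hg : ContinuousOn g (Icc 0 1)) :
    ContinuousOn (fun x => g (leftBranch x) / (1 + x) ^ 2) (Icc 0 1) :=
  (hg.comp continuousOn_leftBranch mapsTo_leftBranch).div (by fun_prop) fun x hx => by
    have := hx.1
    positivity

lemma continuousOn_rightBranch_term (hg : ContinuousOn g (Icc 0 1)) :
    ContinuousOn (fun x => g (rightBranch x) / 2) (Icc 0 1) :=
  (hg.comp continuous_rightBranch.continuousOn mapsTo_rightBranch).div_const 2

lemma continuousOn_transfer (hg : ContinuousOn g (Icc 0 1)) :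
    ContinuousOn (transfer g) (Icc 0 1) :=
  (continuousOn_leftBranch_term hg).add (continuousOn_rightBranch_term hg)

lemma integral_leftBranch_term (hg : ContinuousOn g (Icc 0 1)) :
    ∫ x in (0 : ℝ)..1, g (leftBranch x) / (1 + x) ^ 2 = ∫ x in (0 : ℝ)..(1 / 2), g x := by
  have hI : uIcc (0 : ℝ) 1 = Icc 0 1 := uIcc_of_le zero_le_one
  have hne : ∀ x ∈ Icc (0 : ℝ) 1, 1 + x ≠ 0 := fun x hx => by linarith [hx.1]
  have h := intervalIntegral.integral_comp_mul_deriv'' (a := 0) (b := 1) (g := g)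
    (hI ▸ continuousOn_leftBranch)
    (fun x hx => (hasDerivAt_leftBranch
      (hne x (hI ▸ Ioo_subset_Icc_self hx))).hasDerivWithinAt)
    (hI ▸ continuousOn_const.div (by fun_prop) fun x hx => pow_ne_zero 2 (hne x hx))
    (hI ▸ hg.mono mapsTo_leftBranch.image_subset)
  have h₀ : leftBranch 0 = 0 := by norm_num [leftBranch]
  have h₁ : leftBranch 1 = 1 / 2 := by norm_num [leftBranch]
  simpa only [Function.comp_apply, mul_one_div, h₀, h₁] using h

lemma integral_rightBranch_term (g : ℝ → ℝ) :
    ∫ x in (0 : ℝ)..1, g (rightBranch x) / 2 = ∫ x in (1 / 2 : ℝ)..1, g x := by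
  simp only [rightBranch]
  rw [intervalIntegral.integral_div, intervalIntegral.integral_comp_sub_div g two_ne_zero]
  norm_num

lemma integral_transfer (hg : ContinuousOn g (Icc 0 1)) :
    ∫ x in (0 : ℝ)..1, transfer g x = ∫ x in (0 : ℝ)..1, g x := by
  unfold transfer
  rw [intervalIntegral.integral_add
      ((continuousOn_leftBranch_term hg).intervalIntegrable_of_Icc zero_le_one)
      ((continuousOn_rightBranch_term hg).intervalIntegrable_of_Icc zero_le_one),
    integral_leftBranch_term hg, integral_rightBranch_term]
  exact intervalIntegral.integral_add_adjacent_intervals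
    ((hg.mono (Icc_subset_Icc_right (by norm_num))).intervalIntegrable_of_Icc (by norm_num))
    ((hg.mono (Icc_subset_Icc_left (by norm_num))).intervalIntegrable_of_Icc (by norm_num))

lemma transfer_comp_psi_mul (f : ℝ → ℝ) {x : ℝ} (hx : x ∈ Icc (0 : ℝ) 1) :
    transfer (fun y => f (psi y) * g y) x = f x * transfer g x := by
  simp only [transfer, psi_leftBranch hx, psi_rightBranch hx]
  ring

lemma integral_comp_psi_mul {f : ℝ → ℝ} (hf : ContinuousOn f (Icc 0 1))
    (hg : ContinuousOn g (Icc 0 1)) :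
    ∫ x in (0 : ℝ)..1, f (psi x) * g x = ∫ x in (0 : ℝ)..1, f x * transfer g x := by
  have hfg : ContinuousOn (fun x => f (psi x) * g x) (Icc 0 1) :=
    (hf.comp continuousOn_psi mapsTo_psi).mul hg
  rw [← integral_transfer hfg]
  refine intervalIntegral.integral_congr fun x hx => ?_
  rw [uIcc_of_le zero_le_one] at hx
  exact transfer_comp_psi_mul f hx

lemma continuousOn_transfer_iterate (hg : ContinuousOn g (Icc 0 1)) (n : ℕ) :
    ContinuousOn (transfer^[n] g) (Icc 0 1) :=
  Function.Iterate.rec (fun g => ContinuousOn g (Icc 0 1)) hg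
    (fun _ => continuousOn_transfer) n

lemma transfer_nonneg (hg : ∀ x ∈ Icc (0 : ℝ) 1, 0 ≤ g x) :
    ∀ x ∈ Icc (0 : ℝ) 1, 0 ≤ transfer g x := fun x hx => by
  have hl := hg _ (mapsTo_leftBranch hx)
  have hr := hg _ (mapsTo_rightBranch hx)
  unfold transfer
  positivity

lemma transfer_iterate_nonneg (hg : ∀ x ∈ Icc (0 : ℝ) 1, 0 ≤ g x) (n : ℕ) :
    ∀ x ∈ Icc (0 : ℝ) 1, 0 ≤ (transfer^[n] g) x :=
  Function.Iterate.rec (fun g : ℝ → ℝ => ∀ x ∈ Icc (0 : ℝ) 1, 0 ≤ g x) hg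
    (fun _ => transfer_nonneg) n

lemma integral_transfer_iterate (hg : ContinuousOn g (Icc 0 1)) (n : ℕ) :
    ∫ x in (0 : ℝ)..1, (transfer^[n] g) x = ∫ x in (0 : ℝ)..1, g x := by
  induction n with
  | zero => rfl
  | succ n ih =>
    rw [Function.iterate_succ_apply', integral_transfer (continuousOn_transfer_iterate hg n), ih]

lemma integral_comp_psi_iterate_mul {f : ℝ → ℝ} (hf : ContinuousOn f (Icc 0 1))
    (hg : ContinuousOn g (Icc 0 1)) (n : ℕ) :
    ∫ x in (0 : ℝ)..1, f (psi^[n] x) * g x =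
      ∫ x in (0 : ℝ)..1, f x * (transfer^[n] g) x := by
  induction n generalizing g with
  | zero => rfl
  | succ n ih =>
    have hfn : ContinuousOn (fun x => f (psi^[n] x)) (Icc 0 1) :=
      hf.comp (continuousOn_psi.iterate mapsTo_psi n) (mapsTo_psi.iterate n)
    simp only [Function.iterate_succ_apply]
    rw [integral_comp_psi_mul hfn hg, ih (continuousOn_transfer hg)]

end Transfer

/-! ### The Harnack cone -/

/-- The cone of continuous nonnegative densities on `[0, 1]` satisfying the Harnack inequality
`(x / y)² g x ≤ g y ≤ (y / x)² g x` for `0 < x ≤ y ≤ 1`. It is preserved by `transfer` and makes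
values of a density at different points comparable. -/
structure IsHarnack (g : ℝ → ℝ) : Prop where
  continuousOn : ContinuousOn g (Icc 0 1)
  nonneg : ∀ x ∈ Icc (0 : ℝ) 1, 0 ≤ g x
  monotoneOn_sq_mul : MonotoneOn (fun x => x ^ 2 * g x) (Ioc 0 1)
  antitoneOn_div_sq : AntitoneOn (fun x => g x / x ^ 2) (Ioc 0 1)

lemma isHarnack_one : IsHarnack 1 where
  continuousOn := continuousOn_const
  nonneg _ _ := zero_le_one
  monotoneOn_sq_mul := fun x hx y _ hxy => by
    have := hx.1
    simp only [Pi.one_apply, mul_one]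
    gcongr
  antitoneOn_div_sq := fun x hx y _ hxy => by
    have := hx.1
    simp only [Pi.one_apply]
    gcongr

namespace IsHarnack

variable {g : ℝ → ℝ}

lemma monotoneOn_sq_mul_transfer (hg : IsHarnack g) :
    MonotoneOn (fun x => x ^ 2 * transfer g x) (Ioc 0 1) := by
  have expand : ∀ x ∈ Ioc (0 : ℝ) 1, x ^ 2 * transfer g x =
      leftBranch x ^ 2 * g (leftBranch x) +
        g (rightBranch x) / rightBranch x ^ 2 * (x * rightBranch x) ^ 2 / 2 := fun x hx => by
    have h₁ : 1 + x ≠ 0 := by linarith [hx.1]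
    have h₂ := (rightBranch_mem_Ioc (Ioc_subset_Icc_self hx)).1.ne'
    rw [transfer, show leftBranch x ^ 2 = x ^ 2 / (1 + x) ^ 2 from div_pow _ _ _]
    field_simp
  intro x hx y hy hxy
  have hrx := rightBranch_mem_Ioc (Ioc_subset_Icc_self hx)
  have hry := rightBranch_mem_Ioc (Ioc_subset_Icc_self hy)
  have hgry := hg.nonneg _ (Ioc_subset_Icc_self hry)
  have hx_nonneg : 0 ≤ x * rightBranch x := mul_nonneg hx.1.le hrx.1.le
  have left : leftBranch x ^ 2 * g (leftBranch x) ≤ leftBranch y ^ 2 * g (leftBranch y) :=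
    hg.monotoneOn_sq_mul (leftBranch_mem_Ioc hx) (leftBranch_mem_Ioc hy)
      (monotoneOn_leftBranch hx hy hxy)
  have right : g (rightBranch x) / rightBranch x ^ 2 ≤ g (rightBranch y) / rightBranch y ^ 2 :=
    hg.antitoneOn_div_sq hry hrx (antitone_rightBranch hxy)
  have weight : x * rightBranch x ≤ y * rightBranch y := monotoneOn_mul_rightBranch hx hy hxy
  simp only [expand x hx, expand y hy]
  gcongr

lemma antitoneOn_transfer_div_sq (hg : IsHarnack g) :
    AntitoneOn (fun x => transfer g x / x ^ 2) (Ioc 0 1) := by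
  have expand : ∀ x ∈ Ioc (0 : ℝ) 1, transfer g x / x ^ 2 =
      g (leftBranch x) / leftBranch x ^ 2 / (1 + x) ^ 4 +
        rightBranch x ^ 2 * g (rightBranch x) / (2 * (x * rightBranch x) ^ 2) := fun x hx => by
    have h₀ := hx.1.ne'
    have h₁ : 1 + x ≠ 0 := by linarith [hx.1]
    have h₂ := (rightBranch_mem_Ioc (Ioc_subset_Icc_self hx)).1.ne'
    rw [transfer, show leftBranch x ^ 2 = x ^ 2 / (1 + x) ^ 2 from div_pow _ _ _]
    field_simp
  intro x hx y hy hxy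
  have hrx := rightBranch_mem_Ioc (Ioc_subset_Icc_self hx)
  have hry := rightBranch_mem_Ioc (Ioc_subset_Icc_self hy)
  have hglx := hg.nonneg _ (Ioc_subset_Icc_self (leftBranch_mem_Ioc hx))
  have hgrx := hg.nonneg _ (Ioc_subset_Icc_self hrx)
  have hx_pos : 0 < x * rightBranch x := mul_pos hx.1 hrx.1
  have hx₁ : 0 < 1 + x := by linarith [hx.1]
  have left : g (leftBranch y) / leftBranch y ^ 2 ≤ g (leftBranch x) / leftBranch x ^ 2 :=
    hg.antitoneOn_div_sq (leftBranch_mem_Ioc hx) (leftBranch_mem_Ioc hy)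
      (monotoneOn_leftBranch hx hy hxy)
  have right : rightBranch y ^ 2 * g (rightBranch y) ≤ rightBranch x ^ 2 * g (rightBranch x) :=
    hg.monotoneOn_sq_mul hry hrx (antitone_rightBranch hxy)
  have weight : x * rightBranch x ≤ y * rightBranch y := monotoneOn_mul_rightBranch hx hy hxy
  simp only [expand x hx, expand y hy]
  gcongr

protected lemma transfer (hg : IsHarnack g) : IsHarnack (transfer g) where
  continuousOn := continuousOn_transfer hg.continuousOn
  nonneg := transfer_nonneg hg.nonneg
  monotoneOn_sq_mul := hg.monotoneOn_sq_mul_transfer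
  antitoneOn_div_sq := hg.antitoneOn_transfer_div_sq

lemma transfer_iterate (hg : IsHarnack g) (n : ℕ) : IsHarnack (transfer^[n] g) :=
  Function.Iterate.rec IsHarnack hg (fun _ => IsHarnack.transfer) n

lemma le_div_sq (hg : IsHarnack g) {x : ℝ} (hx : x ∈ Ioc (0 : ℝ) 1) : g x ≤ g 1 / x ^ 2 := by
  have h := hg.monotoneOn_sq_mul hx (right_mem_Ioc.2 one_pos) hx.2
  rw [le_div_iff₀ (pow_pos hx.1 2)]
  linarith

lemma sq_mul_le (hg : IsHarnack g) {x : ℝ} (hx : x ∈ Ioc (0 : ℝ) 1) : x ^ 2 * g 1 ≤ g x := by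
  have h := hg.antitoneOn_div_sq hx (right_mem_Ioc.2 one_pos) hx.2
  simp only [one_pow, div_one] at h
  rw [mul_comm]
  exact (le_div_iff₀ (pow_pos hx.1 2)).1 h

end IsHarnack

/-! ### Energy decay -/

/-- The density of the law with Lebesgue density `g` relative to the infinite `psi`-invariant
measure with density `1 / (x (2 - x))` on `(0, 1]`. -/
def relDensity (g : ℝ → ℝ) (x : ℝ) : ℝ := x * (2 - x) * g x

/-- The difference of the relative density of `g` between the two preimages of `x` under `psi`. -/
noncomputable def branchGap (g : ℝ → ℝ) (x : ℝ) : ℝ :=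
  relDensity g (leftBranch x) - relDensity g (rightBranch x)

/-- The energy `∫ k² dμ` of the relative density `k` of `g`, with `μ` the invariant measure. -/
noncomputable def energy (g : ℝ → ℝ) : ℝ := ∫ x in (0 : ℝ)..1, relDensity g x * g x

section Energy

variable {g : ℝ → ℝ}

lemma continuousOn_relDensity (hg : ContinuousOn g (Icc 0 1)) :
    ContinuousOn (relDensity g) (Icc 0 1) :=
  ContinuousOn.mul (by fun_prop) hg

lemma continuousOn_branchGap (hg : ContinuousOn g (Icc 0 1)) :
    ContinuousOn (branchGap g) (Icc 0 1) :=
  ((continuousOn_relDensity hg).comp continuousOn_leftBranch mapsTo_leftBranch).sub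
    ((continuousOn_relDensity hg).comp continuous_rightBranch.continuousOn mapsTo_rightBranch)

lemma exists_relDensity_le (hg : ContinuousOn g (Icc 0 1)) :
    ∃ C, ∀ x ∈ Icc (0 : ℝ) 1, relDensity g x ≤ C := by
  obtain ⟨C, hC⟩ := isCompact_Icc.bddAbove_image (continuousOn_relDensity hg)
  exact ⟨C, fun x hx => hC (mem_image_of_mem _ hx)⟩

lemma relDensity_transfer (g : ℝ → ℝ) {x : ℝ} (hx : x ∈ Icc (0 : ℝ) 1) :
    relDensity (transfer g) x = (2 - x) / (2 + x) * relDensity g (leftBranch x) +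
      2 * x / (2 + x) * relDensity g (rightBranch x) := by
  have h₁ : 1 + x ≠ 0 := by linarith [hx.1]
  have h₂ : 2 + x ≠ 0 := by linarith [hx.1]
  simp only [relDensity, transfer, leftBranch, rightBranch]
  field_simp
  ring

lemma relDensity_transfer_le {C : ℝ} (hC : ∀ x ∈ Icc (0 : ℝ) 1, relDensity g x ≤ C) :
    ∀ x ∈ Icc (0 : ℝ) 1, relDensity (transfer g) x ≤ C := by
  intro x hx
  have hx₀ : 0 ≤ x := hx.1
  have hx₂ : 0 ≤ 2 - x := by linarith [hx.2]
  calc relDensity (transfer g) x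
      ≤ (2 - x) / (2 + x) * C + 2 * x / (2 + x) * C := by
        rw [relDensity_transfer g hx]
        gcongr
        exacts [hC _ (mapsTo_leftBranch hx), hC _ (mapsTo_rightBranch hx)]
    _ = C := by field_simp; ring

lemma relDensity_transfer_iterate_le {C : ℝ} (hC : ∀ x ∈ Icc (0 : ℝ) 1, relDensity g x ≤ C)
    (n : ℕ) : ∀ x ∈ Icc (0 : ℝ) 1, relDensity (transfer^[n] g) x ≤ C :=
  Function.Iterate.rec (fun g => ∀ x ∈ Icc (0 : ℝ) 1, relDensity g x ≤ C) hC
    (fun _ => relDensity_transfer_le) n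

lemma relDensity_nonneg (hg : ∀ x ∈ Icc (0 : ℝ) 1, 0 ≤ g x) {x : ℝ} (hx : x ∈ Icc (0 : ℝ) 1) :
    0 ≤ relDensity g x :=
  mul_nonneg (mul_nonneg hx.1 (by linarith [hx.2])) (hg x hx)

lemma relDensity_leftBranch_le (hg : ∀ x ∈ Icc (0 : ℝ) 1, 0 ≤ g x) {x : ℝ}
    (hx : x ∈ Icc (0 : ℝ) 1) :
    relDensity g (leftBranch x) ≤ 3 * x * transfer g x := by
  obtain ⟨hx₀, hx₁⟩ := hx
  have hl := hg _ (mapsTo_leftBranch ⟨hx₀, hx₁⟩)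
  have hr := hg _ (mapsTo_rightBranch ⟨hx₀, hx₁⟩)
  calc relDensity g (leftBranch x)
      = (2 + x) * x * (g (leftBranch x) / (1 + x) ^ 2) := by
        have h₁ : 1 + x ≠ 0 := by linarith
        have h : leftBranch x * (2 - leftBranch x) = (2 + x) * x / (1 + x) ^ 2 := by
          unfold leftBranch
          field_simp
          ring
        rw [relDensity, h]
        ring
    _ ≤ 3 * x * transfer g x := by
        gcongr
        · linarith
        · exact le_add_of_nonneg_right (by positivity)

lemma energy_nonneg (hg : ∀ x ∈ Icc (0 : ℝ) 1, 0 ≤ g x) : 0 ≤ energy g :=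
  intervalIntegral.integral_nonneg zero_le_one fun x hx =>
    mul_nonneg (relDensity_nonneg hg hx) (hg x hx)

/-- This is the variance identity `E k² - (E k)² = p q (k₁ - k₂)²` for the two-point average in
`relDensity_transfer`, multiplied by the invariant density. -/
lemma transfer_relDensity_mul_sub (g : ℝ → ℝ) {x : ℝ} (hx : x ∈ Icc (0 : ℝ) 1) :
    transfer (fun y => relDensity g y * g y) x - relDensity (transfer g) x * transfer g x =
      2 / (2 + x) ^ 2 * branchGap g x ^ 2 := by
  have h₁ : 1 + x ≠ 0 := by linarith [hx.1]
  have h₂ : 2 + x ≠ 0 := by linarith [hx.1]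
  simp only [branchGap, relDensity, transfer, leftBranch, rightBranch]
  field_simp
  ring

lemma integral_branchGap_sq_le (hg : ContinuousOn g (Icc 0 1)) :
    ∫ x in (0 : ℝ)..1, branchGap g x ^ 2 ≤ 9 / 2 * (energy g - energy (transfer g)) := by
  have hkg := (continuousOn_relDensity hg).fun_mul hg
  have hTg := continuousOn_transfer hg
  have hkTg := (continuousOn_relDensity hTg).fun_mul hTg
  have hT := continuousOn_transfer hkg
  unfold energy
  rw [← integral_transfer hkg, ← intervalIntegral.integral_sub
      (hT.intervalIntegrable_of_Icc zero_le_one) (hkTg.intervalIntegrable_of_Icc zero_le_one),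
    ← intervalIntegral.integral_const_mul]
  refine intervalIntegral.integral_mono_on zero_le_one
    (((continuousOn_branchGap hg).pow 2).intervalIntegrable_of_Icc zero_le_one)
    ((continuousOn_const.mul (hT.sub hkTg)).intervalIntegrable_of_Icc zero_le_one) fun x hx => ?_
  have hx₀ := hx.1
  have weight : 1 ≤ 9 / 2 * (2 / (2 + x) ^ 2) := by
    rw [← mul_div_assoc, one_le_div (by positivity)]
    nlinarith [hx.2]
  rw [transfer_relDensity_mul_sub g hx, ← mul_assoc]
  exact le_mul_of_one_le_left (sq_nonneg _) weight

lemma tendsto_integral_branchGap_sq (hg : ContinuousOn g (Icc 0 1))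
    (hg_nonneg : ∀ x ∈ Icc (0 : ℝ) 1, 0 ≤ g x) :
    Tendsto (fun n => ∫ x in (0 : ℝ)..1, branchGap (transfer^[n] g) x ^ 2) atTop (𝓝 0) := by
  have nonneg : ∀ n, 0 ≤ ∫ x in (0 : ℝ)..1, branchGap (transfer^[n] g) x ^ 2 := fun n =>
    intervalIntegral.integral_nonneg zero_le_one fun x _ => sq_nonneg _
  have decay : ∀ n, ∫ x in (0 : ℝ)..1, branchGap (transfer^[n] g) x ^ 2 ≤
      9 / 2 * (energy (transfer^[n] g) - energy (transfer^[n + 1] g)) := fun n => by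
    rw [Function.iterate_succ_apply']
    exact integral_branchGap_sq_le (continuousOn_transfer_iterate hg n)
  have anti : Antitone fun n => energy (transfer^[n] g) :=
    antitone_nat_of_succ_le fun n => by linarith [nonneg n, decay n]
  have lim := tendsto_atTop_ciInf anti
    ⟨0, forall_mem_range.2 fun n => energy_nonneg (transfer_iterate_nonneg hg_nonneg n)⟩
  have diff := (lim.sub (lim.comp (tendsto_add_atTop_nat 1))).const_mul (9 / 2)
  rw [sub_self, mul_zero] at diff
  exact squeeze_zero nonneg decay diff

end Energy

/-! ### Escape of mass to the origin -/

lemma tendsto_zero_of_forall_mul_le {ι : Type*} {l : Filter ι} {u v : ι → ℝ} {A : ℝ} {w : ℝ → ℝ}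
    (hu : ∀ i, 0 ≤ u i) (hv : Tendsto v l (𝓝 0))
    (h : ∀ L, 0 < L → ∀ i, u i * L ≤ A + w L * v i) : Tendsto u l (𝓝 0) := by
  refine tendsto_order.2 ⟨fun a ha => .of_forall fun i => ha.trans_le (hu i), fun ε hε => ?_⟩
  have hL : 0 < (|A| + 1) / ε := by positivity
  have hw := hv.const_mul (w ((|A| + 1) / ε))
  rw [mul_zero] at hw
  filter_upwards [hw.eventually_lt_const one_pos] with i hi
  have bound : u i * ((|A| + 1) / ε) < |A| + 1 := by linarith [h _ hL i, le_abs_self A]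
  rw [← mul_div_assoc, div_lt_iff₀ hε, mul_comm] at bound
  exact lt_of_mul_lt_mul_left bound (by positivity)

lemma mul_le_integral_of_le_mul {F : ℝ → ℝ} {c L : ℝ} (hL : 0 ≤ L)
    (hF : ContinuousOn F (Icc 0 1)) (hF_nonneg : ∀ x ∈ Ioc (0 : ℝ) 1, 0 ≤ F x)
    (h : ∀ x ∈ Icc (Real.exp (-L)) 1, c ≤ x * F x) : c * L ≤ ∫ x in (0 : ℝ)..1, F x := by
  set δ := Real.exp (-L) with hδ
  have hδ₀ : 0 < δ := Real.exp_pos _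
  have hδ₁ : δ ≤ 1 := Real.exp_le_one_iff.2 (by linarith)
  have hinv : ContinuousOn (fun x : ℝ => c * x⁻¹) (Icc δ 1) :=
    continuousOn_const.mul (continuousOn_inv₀.mono fun x hx => (hδ₀.trans_le hx.1).ne')
  calc c * L = ∫ x in δ..1, c * x⁻¹ := by
        rw [intervalIntegral.integral_const_mul, integral_inv_of_pos hδ₀ one_pos, one_div,
          Real.log_inv, hδ, Real.log_exp, neg_neg]
    _ ≤ ∫ x in δ..1, F x := by
        refine intervalIntegral.integral_mono_on hδ₁ (hinv.intervalIntegrable_of_Icc hδ₁)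
          ((hF.mono (Icc_subset_Icc_left hδ₀.le)).intervalIntegrable_of_Icc hδ₁) fun x hx => ?_
        rw [← div_eq_mul_inv, div_le_iff₀' (hδ₀.trans_le hx.1)]
        exact h x hx
    _ ≤ ∫ x in (0 : ℝ)..1, F x :=
        intervalIntegral.integral_mono_interval hδ₀.le hδ₁ le_rfl
          ((ae_restrict_iff' measurableSet_Ioc).2 (.of_forall hF_nonneg))
          (hF.intervalIntegrable_of_Icc zero_le_one)

namespace IsHarnack

variable {g : ℝ → ℝ}

lemma eval_one_div_eight_le_relDensity (hg : IsHarnack g) {y : ℝ} (hy : y ∈ Icc (1 / 2 : ℝ) 1) :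
    g 1 / 8 ≤ relDensity g y := by
  obtain ⟨hy₀, hy₁⟩ := hy
  have hg₁ := hg.nonneg 1 (right_mem_Icc.2 zero_le_one)
  have hgy := hg.nonneg y ⟨by linarith, hy₁⟩
  calc g 1 / 8 = 1 / 2 * ((1 / 2) ^ 2 * g 1) := by ring
    _ ≤ 1 / 2 * (y ^ 2 * g 1) := by gcongr
    _ ≤ 1 / 2 * g y := by gcongr; exact hg.sq_mul_le ⟨by linarith, hy₁⟩
    _ ≤ y * (2 - y) * g y := by gcongr; nlinarith

lemma eval_one_sq_le (hg : IsHarnack g) {C : ℝ} (hC : ∀ x ∈ Icc (0 : ℝ) 1, relDensity g x ≤ C)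
    {x : ℝ} (hx : x ∈ Icc (0 : ℝ) 1) :
    g 1 ^ 2 / 64 ≤ 6 * C * x * transfer g x + 2 * branchGap g x ^ 2 := by
  set a := relDensity g (leftBranch x)
  set b := relDensity g (rightBranch x)
  have ha₀ : 0 ≤ a := relDensity_nonneg hg.nonneg (mapsTo_leftBranch hx)
  have haC : a ≤ C := hC _ (mapsTo_leftBranch hx)
  have hg₁ := hg.nonneg 1 (right_mem_Icc.2 zero_le_one)
  calc g 1 ^ 2 / 64 = (g 1 / 8) ^ 2 := by ring
    _ ≤ b ^ 2 := by
        gcongr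
        exact hg.eval_one_div_eight_le_relDensity (rightBranch_mem_Icc hx)
    _ ≤ 2 * (a * a) + 2 * (a - b) ^ 2 := by nlinarith [sq_nonneg (2 * a - b)]
    _ ≤ 2 * (C * (3 * x * transfer g x)) + 2 * (a - b) ^ 2 := by
        gcongr
        exacts [ha₀.trans haC, relDensity_leftBranch_le hg.nonneg hx]
    _ = 6 * C * x * transfer g x + 2 * branchGap g x ^ 2 := by
        rw [branchGap]
        ring

lemma eval_one_sq_mul_le (hg : IsHarnack g) {C : ℝ}
    (hC : ∀ x ∈ Icc (0 : ℝ) 1, relDensity g x ≤ C) {L : ℝ} (hL : 0 ≤ L) :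
    g 1 ^ 2 / 64 * L ≤ 6 * C * (∫ x in (0 : ℝ)..1, g x) +
      2 * Real.exp L * ∫ x in (0 : ℝ)..1, branchGap g x ^ 2 := by
  have hC₀ : 0 ≤ C := (relDensity_nonneg hg.nonneg (left_mem_Icc.2 zero_le_one)).trans
    (hC 0 (left_mem_Icc.2 zero_le_one))
  have hmass : ContinuousOn (fun x => 6 * C * transfer g x) (Icc 0 1) :=
    continuousOn_const.mul hg.transfer.continuousOn
  have hgap : ContinuousOn (fun x => 2 * Real.exp L * branchGap g x ^ 2) (Icc 0 1) :=
    continuousOn_const.mul ((continuousOn_branchGap hg.continuousOn).pow 2)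
  rw [← integral_transfer hg.continuousOn, ← intervalIntegral.integral_const_mul,
    ← intervalIntegral.integral_const_mul, ← intervalIntegral.integral_add
      (hmass.intervalIntegrable_of_Icc zero_le_one) (hgap.intervalIntegrable_of_Icc zero_le_one)]
  refine mul_le_integral_of_le_mul hL (hmass.add hgap) (fun x hx => ?_) fun x hx => ?_
  · have := hg.transfer.nonneg x (Ioc_subset_Icc_self hx)
    positivity
  · have hinv : 1 ≤ Real.exp L * x := by
      rw [← inv_le_iff_one_le_mul₀' (Real.exp_pos L), ← Real.exp_neg]
      exact hx.1
    have hgap_le : branchGap g x ^ 2 ≤ Real.exp L * x * branchGap g x ^ 2 :=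
      le_mul_of_one_le_left (sq_nonneg _) hinv
    linarith [hg.eval_one_sq_le hC ⟨(Real.exp_pos _).le.trans hx.1, hx.2⟩]

lemma tendsto_transfer_iterate_one (hg : IsHarnack g) :
    Tendsto (fun n => (transfer^[n] g) 1) atTop (𝓝 0) := by
  obtain ⟨C, hC⟩ := exists_relDensity_le hg.continuousOn
  have sq : Tendsto (fun n => (transfer^[n] g) 1 ^ 2 / 64) atTop (𝓝 0) := by
    refine tendsto_zero_of_forall_mul_le (fun n => by positivity)
      (tendsto_integral_branchGap_sq hg.continuousOn hg.nonneg)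
      (A := 6 * C * ∫ x in (0 : ℝ)..1, g x)
      (w := fun L => 2 * Real.exp L) fun L hL n => ?_
    rw [← integral_transfer_iterate hg.continuousOn n]
    exact (hg.transfer_iterate n).eval_one_sq_mul_le (relDensity_transfer_iterate_le hC n) hL.le
  have sqrt := (sq.mul_const 64).sqrt
  simp only [div_mul_cancel₀ _ (show (64 : ℝ) ≠ 0 by norm_num), zero_mul, Real.sqrt_zero] at sqrt
  exact sqrt.congr fun n =>
    Real.sqrt_sq ((hg.transfer_iterate n).nonneg 1 (right_mem_Icc.2 zero_le_one))

lemma tendstoUniformlyOn_transfer_iterate (hg : IsHarnack g) {u : Set ℝ} (hu : u ∈ 𝓝 0) :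
    TendstoUniformlyOn (fun n => transfer^[n] g) 0 atTop (Ioc 0 1 \ u) := by
  obtain ⟨r, hr, hru⟩ := Metric.mem_nhds_iff.1 hu
  have lim := hg.tendsto_transfer_iterate_one.div_const (r ^ 2)
  rw [zero_div] at lim
  rw [Metric.tendstoUniformlyOn_iff]
  intro ε hε
  filter_upwards [lim.eventually_lt_const hε] with n hn x ⟨hx, hxu⟩
  have hgn := hg.transfer_iterate n
  have hrx : r ≤ x := by
    by_contra! h
    exact hxu (hru (by rwa [Metric.mem_ball, Real.dist_0_eq_abs, abs_of_pos hx.1]))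
  have h₁ := hgn.nonneg 1 (right_mem_Icc.2 zero_le_one)
  rw [dist_comm, Pi.zero_apply, Real.dist_0_eq_abs,
    abs_of_nonneg (hgn.nonneg x (Ioc_subset_Icc_self hx))]
  calc (transfer^[n] g) x
      ≤ (transfer^[n] g) 1 / x ^ 2 := hgn.le_div_sq hx
    _ ≤ (transfer^[n] g) 1 / r ^ 2 := by gcongr
    _ < ε := hn

lemma tendsto_integral_mul_transfer_iterate (hg : IsHarnack g)
    (hg_mass : ∫ x in (0 : ℝ)..1, g x = 1) {f : ℝ → ℝ} (hf : ContinuousOn f (Icc 0 1)) :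
    Tendsto (fun n => ∫ x in (0 : ℝ)..1, f x * (transfer^[n] g) x) atTop
      (𝓝 (f 0)) := by
  have hgn := hg.transfer_iterate
  have mass : ∀ n, ∫ x in Ioc (0 : ℝ) 1, (transfer^[n] g) x = 1 := fun n => by
    rw [← intervalIntegral.integral_of_le zero_le_one, integral_transfer_iterate hg.continuousOn,
      hg_mass]
  have h := tendsto_setIntegral_peak_smul_of_integrableOn_of_tendsto (x₀ := 0)
    measurableSet_Ioc measurableSet_Ioc Subset.rfl self_mem_nhdsWithin measure_Ioc_lt_top.ne
    (.of_forall fun n x hx => (hgn n).nonneg x (Ioc_subset_Icc_self hx))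
    (fun u hu h₀ => hg.tendstoUniformlyOn_transfer_iterate (hu.mem_nhds h₀))
    (tendsto_const_nhds.congr fun n => (mass n).symm)
    (.of_forall fun n => ((hgn n).continuousOn.mono Ioc_subset_Icc_self).aestronglyMeasurable
      measurableSet_Ioc)
    (hf.integrableOn_Icc.mono_set Ioc_subset_Icc_self)
    ((hf 0 (left_mem_Icc.2 zero_le_one)).mono Ioc_subset_Icc_self)
  simpa only [intervalIntegral.integral_of_le zero_le_one, smul_eq_mul, mul_comm] using h

end IsHarnack

end ParadoxicalMap

open ParadoxicalMap

theorem stmt_12_general {g : ℝ → ℝ} (hg : IsHarnack g) (hg_mass : ∫ x in (0 : ℝ)..1, g x = 1)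
    {f : ℝ → ℝ} (hf : ContinuousOn f (Icc 0 1)) :
    Tendsto (fun n : ℕ => ∫ x in (0 : ℝ)..1, f (psi^[n] x) * g x) atTop (𝓝 (f 0)) := by
  simp only [integral_comp_psi_iterate_mul hf hg.continuousOn]
  exact hg.tendsto_integral_mul_transfer_iterate hg_mass hf

/-- The iterates of the uniform distribution on `[0,1]` under the paradoxical map converge
weakly to the Dirac measure at the origin: for every bounded continuous `f : ℝ → ℝ`,
`∫ f d(ν ∘ (φ^n)⁻¹) → f(0) = ∫ f dδ₀` as `n → ∞`, where `ν` is Lebesgue measure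
restricted to `[0,1]`. -/
theorem stmt_12 (f : BoundedContinuousFunction ℝ ℝ) :
    Filter.Tendsto
      (fun n : ℕ =>
        ∫ x, f x ∂(Measure.map (psi^[n]) (volume.restrict (Set.Icc (0 : ℝ) 1))))
      Filter.atTop (nhds (f 0)) := by
  refine (stmt_12_general isHarnack_one (by simp) f.continuous.continuousOn).congr fun n => ?_
  rw [integral_map (measurable_psi.iterate n).aemeasurable f.continuous.aestronglyMeasurable,
    integral_Icc_eq_integral_Ioc, ← intervalIntegral.integral_of_le zero_le_one]
  simp only [Pi.one_apply, mul_one]
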